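/- Let H be a complex Hilbert space, let A be a JC-algebra on H, and let J = {a ∈ A : b·a·c + c*·a·b* ∈ A for all b, c ∈ C*(A)}. If a₁ ∈ J and a₂, …, aₙ ∈ A, and a denotes the operator product a₂a₃⋯aₙ, then a₁·a + a*·a₁ ∈ J. -/

import Mathlib

/-!
An element `a` of `J` absorbs every `x ∈ C*(A)`, not just products of elements of `A`. Along an
approximate unit `e` of `C*(A)`, the elements `e a x + x* a e*` of `A` converge to `a x + x* a`, so
this limit lies in the closed set `A`. Multiplying by `b, c ∈ C*(A)` splits
`b (a x + x* a) c + c* (a x + x* a) b*` into two expressions of the form defining `a ∈ J`, for the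
pairs `(b, x c)` and `(b x*, c)`.
-/

variable {H : Type*} [NormedAddCommGroup H] [InnerProductSpace ℂ H] [CompleteSpace H]

/-- A JC-algebra on a complex Hilbert space `H`: a norm-closed real-linear subspace of the
self-adjoint bounded operators on `H`, closed under the Jordan product `(a*b + b*a)/2`. -/
def IsJCAlgebra (A : Set (H →L[ℂ] H)) : Prop :=
  IsClosed A ∧
  (0 : H →L[ℂ] H) ∈ A ∧
  (∀ a ∈ A, ∀ b ∈ A, a + b ∈ A) ∧
  (∀ (r : ℝ), ∀ a ∈ A, r • a ∈ A) ∧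
  (∀ a ∈ A, IsSelfAdjoint a) ∧
  (∀ a ∈ A, ∀ b ∈ A, (2⁻¹ : ℝ) • (a * b + b * a) ∈ A)

/-- `C*(A)`: the smallest norm-closed complex (non-unital) `*`-subalgebra of `B(H)`
containing `A`. -/
noncomputable def Cstar (A : Set (H →L[ℂ] H)) : Set (H →L[ℂ] H) :=
  closure (NonUnitalStarAlgebra.adjoin ℂ A : Set (H →L[ℂ] H))

/-- The set `J = {a ∈ A : b·a·c + c*·a·b* ∈ A for all b, c ∈ C*(A)}`. -/
noncomputable def Jset (A : Set (H →L[ℂ] H)) : Set (H →L[ℂ] H) :=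
  {a | a ∈ A ∧ ∀ b ∈ Cstar A, ∀ c ∈ Cstar A, b * a * c + star c * a * star b ∈ A}

open Filter Topology

/-- The set of `a ∈ A` with `b a c + c* a b* ∈ A` for all `b, c ∈ S`. It extends `Jset`, which is
the case `S = Cstar A`, to subsets `A` and `S` of any type with these operations. -/
def sandwichCore {E : Type*} [Mul E] [Add E] [Star E] (A S : Set E) : Set E :=
  {a | a ∈ A ∧ ∀ b ∈ S, ∀ c ∈ S, b * a * c + star c * a * star b ∈ A}

theorem sandwich_mul_add_star_mul {E : Type*} [NonUnitalSemiring E] [StarMul E] (a b c x : E) :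
    b * (a * x + star x * a) * c + star c * (a * x + star x * a) * star b =
      (b * a * (x * c) + star (x * c) * a * star b) +
        (b * star x * a * c + star c * a * star (b * star x)) := by
  simp only [star_mul, star_star, mul_add, add_mul, mul_assoc]
  abel

theorem mul_add_star_mul_mem_sandwichCore {E σ : Type*} [NonUnitalSemiring E] [StarMul E]
    [SetLike σ E] [MulMemClass σ E] [StarMemClass σ E] {A : AddSubsemigroup E} {S : σ} {a x : E}
    (ha : a ∈ sandwichCore (A : Set E) S) (hx : x ∈ S) (hmem : a * x + star x * a ∈ A) :
    a * x + star x * a ∈ sandwichCore (A : Set E) S := by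
  refine ⟨hmem, fun b hb c hc => ?_⟩
  rw [sandwich_mul_add_star_mul]
  exact add_mem (ha.2 b hb (x * c) (mul_mem hx hc))
    (ha.2 (b * star x) (mul_mem hb (star_mem hx)) c hc)

section NonUnitalCStarAlgebra

variable {E : Type*} [NonUnitalCStarAlgebra E]

theorem prodMk_self_mem_closure_range (a : E) :
    (a, a) ∈ closure (Set.range fun e : E => (e * a, a * star e)) := by
  let _ := CStarAlgebra.spectralOrder E
  have := CStarAlgebra.spectralOrderedRing E
  have hunit := CStarAlgebra.increasingApproximateUnit E
  have hleft : Tendsto (fun e : E => e * a) (CStarAlgebra.approximateUnit E) (𝓝 a) :=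
    hunit.tendsto_mul_right a
  have hright : Tendsto (fun e : E => a * star e) (CStarAlgebra.approximateUnit E) (𝓝 a) := by
    simpa only [star_mul, star_star] using (hunit.tendsto_mul_right (star a)).star
  exact mem_closure_of_tendsto (hleft.prodMk_nhds hright) (.of_forall Set.mem_range_self)

theorem prodMk_self_mem_closure_image {S : NonUnitalStarSubalgebra ℂ E}
    (hS : IsClosed (S : Set E)) {a : E} (ha : a ∈ S) :
    (a, a) ∈ closure ((fun e : E => (e * a, a * star e)) '' S) := by
  have : IsClosed (S : Set E) := hS
  refine map_mem_closure (f := Prod.map ((↑) : S → E) ((↑) : S → E))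
    (continuous_subtype_val.prodMap continuous_subtype_val)
    (prodMk_self_mem_closure_range ⟨a, ha⟩) ?_
  rintro _ ⟨e, rfl⟩
  exact ⟨e, e.2, rfl⟩

theorem mul_add_star_mul_mem {A : Set E} (hA : IsClosed A) {S : NonUnitalStarSubalgebra ℂ E}
    (hS : IsClosed (S : Set E)) {a x : E} (ha : a ∈ sandwichCore A S) (haS : a ∈ S) (hx : x ∈ S) :
    a * x + star x * a ∈ A := by
  have hcont : Continuous fun p : E × E => p.1 * x + star x * p.2 := by fun_prop
  refine closure_minimal ?_ (hA.preimage hcont) (prodMk_self_mem_closure_image hS haS)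
  rintro _ ⟨e, he, rfl⟩
  simpa only [Set.mem_preimage, mul_assoc] using ha.2 e he x hx

theorem jset_absorbs_products_general {A : AddSubsemigroup E} (hA : IsClosed (A : Set E))
    {S : NonUnitalStarSubalgebra ℂ E} (hS : IsClosed (S : Set E)) {a x : E}
    (ha : a ∈ sandwichCore (A : Set E) S) (haS : a ∈ S) (hx : x ∈ S) :
    a * x + star x * a ∈ sandwichCore (A : Set E) S :=
  mul_add_star_mul_mem_sandwichCore ha hx (mul_add_star_mul_mem hA hS ha haS hx)

end NonUnitalCStarAlgebra

theorem subset_cstar (A : Set (H →L[ℂ] H)) : A ⊆ Cstar A :=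
  (NonUnitalStarAlgebra.subset_adjoin ℂ A).trans subset_closure

theorem list_prod_mem_cstar {A : Set (H →L[ℂ] H)} {l : List (H →L[ℂ] H)} (hl : l ≠ [])
    (hlA : ∀ x ∈ l, x ∈ A) : l.prod ∈ Cstar A :=
  l.prod_induction_nonempty (· ∈ (NonUnitalStarAlgebra.adjoin ℂ A).topologicalClosure)
    (fun _ _ => mul_mem) hl fun x hx => subset_cstar A (hlA x hx)

/-- If `a₁ ∈ J`, `a₂, …, aₙ ∈ A` and `a = a₂a₃⋯aₙ`, then `a₁·a + a*·a₁ ∈ J`. -/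
theorem jset_absorbs_products (A : Set (H →L[ℂ] H)) (hA : IsJCAlgebra A)
    (a₁ : H →L[ℂ] H) (ha₁ : a₁ ∈ Jset A)
    (l : List (H →L[ℂ] H)) (hl : l ≠ []) (hlA : ∀ x ∈ l, x ∈ A) :
    a₁ * l.prod + star l.prod * a₁ ∈ Jset A :=
  jset_absorbs_products_general (A := ⟨A, fun ha hb => hA.2.2.1 _ ha _ hb⟩) hA.1
    (NonUnitalStarAlgebra.adjoin ℂ A).isClosed_topologicalClosure
    ha₁ (subset_cstar A ha₁.1) (list_prod_mem_cstar hl hlA)
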